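/- arXiv:2312.01359 — 5 statements merged into one kernel-verified Lean document; each statement's English description precedes it below -/
import Mathlib

section
/- Let T be a string of length n ≥ 2 over an alphabet Σ whose last character occurs exactly once in T. Then every suffixient set S for T is a string attractor for T. -/
/-- The 1-based (inclusive) substring `T[i..j]` of a string `T`. -/
def Substr {A : Type*} (T : List A) (i j : ℕ) : List A := (T.take j).drop (i - 1)

/-- A string `w` (possibly empty) is right-maximal in `T` if there are two distinct
characters `c ≠ c'` such that both `w·c` and `w·c'` occur (as substrings) in `T`. -/
def RightMaximal {A : Type*} (T w : List A) : Prop :=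
  ∃ c c' : A, c ≠ c' ∧ (w ++ [c]) <:+: T ∧ (w ++ [c']) <:+: T

/-- `S ⊆ {1,…,n}` is suffixient for `T` if for every right-maximal string `w` in `T`
and every character `c` such that `w·c` occurs in `T`, there is `s ∈ S` such that
`w·c` is a suffix of `T[1..s]`. -/
def IsSuffixient {A : Type*} (T : List A) (S : Finset ℕ) : Prop :=
  (∀ s ∈ S, 1 ≤ s ∧ s ≤ T.length) ∧
  ∀ (w : List A) (c : A), RightMaximal T w → (w ++ [c]) <:+: T →
    ∃ s ∈ S, (w ++ [c]) <:+ T.take s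

/-- `Γ ⊆ {1,…,n}` is a string attractor for `T` if every substring `T[i..j]` has an
occurrence `T[i'..j']` crossing a position of `Γ`. -/
def IsAttractor {A : Type*} (T : List A) (Γ : Finset ℕ) : Prop :=
  (∀ s ∈ Γ, 1 ≤ s ∧ s ≤ T.length) ∧
  ∀ i j, 1 ≤ i → i ≤ j → j ≤ T.length →
    ∃ i' j', 1 ≤ i' ∧ i' ≤ j' ∧ j' ≤ T.length ∧
      Substr T i' j' = Substr T i j ∧ ∃ s ∈ Γ, i' ≤ s ∧ s ≤ j'

/-! Build a nonempty substring character by character, keeping an occurrence that crosses `S`.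
If `v` is right-maximal, some position of `S` ends an occurrence of `v ++ [c]`. Otherwise the
crossing occurrence of `v` can only be followed by `c`, and so extends to `v ++ [c]`, unless it is
stuck at the end of the string. A last character occurring only once rules this out, since `v` also
occurs followed by `c`. -/

section

variable {A : Type*} {T u v w x y : List A} {c e : A} {i j : ℕ} {S : Finset ℕ}

theorem infix_of_append_singleton_infix (h : v ++ [c] <:+: u ++ [e]) : v <:+: u := by
  rcases List.infix_concat_iff.mp h with ⟨x, hx⟩ | hinf
  · rw [← List.append_assoc] at hx
    exact List.IsSuffix.isInfix ⟨x, List.append_inj_left' hx rfl⟩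
  · exact (List.prefix_append v [c]).isInfix.trans hinf

theorem exists_eq_append_singleton_of_count_getLast_eq_one [DecidableEq A] (hne : T ≠ [])
    (hn : 2 ≤ T.length) (hlast : T.count (T.getLast hne) = 1) :
    ∃ u e, u ≠ [] ∧ e ∉ u ∧ T = u ++ [e] := by
  obtain ⟨u, e, rfl⟩ := (List.eq_nil_or_concat' T).resolve_left hne
  refine ⟨u, e, ?_, ?_, rfl⟩
  · rintro rfl
    simp at hn
  · simpa [List.count_append, List.count_eq_zero] using hlast

theorem rightMaximal_nil {a b : A} (ha : a ∈ T) (hb : b ∈ T) (hab : a ≠ b) :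
    RightMaximal T [] :=
  ⟨a, b, hab, (List.singleton_infix_iff a T).mpr ha, (List.singleton_infix_iff b T).mpr hb⟩

theorem rightMaximal_of_suffix_of_append_singleton_infix (hu : u ≠ []) (he : e ∉ u)
    (hv : v <:+ u ++ [e]) (hvc : v ++ [c] <:+: u ++ [e]) : RightMaximal (u ++ [e]) v := by
  rcases List.suffix_concat_iff.mp hv with rfl | ⟨t, rfl, -⟩
  · obtain ⟨a, ha⟩ := List.exists_mem_of_ne_nil u hu
    exact rightMaximal_nil (List.mem_append_left _ ha) List.mem_concat_self
      (ne_of_mem_of_not_mem ha he)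
  · exact absurd ((infix_of_append_singleton_infix hvc).mem List.mem_concat_self) he

theorem substr_infix : Substr T i j <:+: T :=
  (List.drop_suffix _ _).isInfix.trans (List.take_prefix _ _).isInfix

theorem substr_ne_nil (hi : 1 ≤ i) (hij : i ≤ j) (hj : j ≤ T.length) : Substr T i j ≠ [] := by
  simp only [Substr, ne_eq, List.drop_eq_nil_iff, List.length_take]
  omega

theorem substr_eq_of_append_eq (hT : x ++ w ++ y = T) :
    Substr T (x.length + 1) (x.length + w.length) = w := by
  rw [← hT, Substr, ← List.length_append, List.take_left, Nat.add_sub_cancel, List.drop_left]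

/-- The string `w` has an occurrence in `T` that contains a position of `S`. Positions are 1-based,
so an occurrence preceded by `x` covers the positions `s` with `|x| < s ≤ |x| + |w|`. -/
def HasCrossingOccurrence (T : List A) (S : Finset ℕ) (w : List A) : Prop :=
  ∃ x y, x ++ w ++ y = T ∧ ∃ s ∈ S, x.length < s ∧ s ≤ x.length + w.length

theorem isAttractor_of_hasCrossingOccurrence (hS : ∀ s ∈ S, 1 ≤ s ∧ s ≤ T.length)
    (hcross : ∀ w, w ≠ [] → w <:+: T → HasCrossingOccurrence T S w) : IsAttractor T S := by
  refine ⟨hS, fun i j hi hij hj => ?_⟩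
  obtain ⟨x, y, hT, s, hs, hxs, hsw⟩ := hcross _ (substr_ne_nil hi hij hj) substr_infix
  have hle : (x ++ Substr T i j).length ≤ T.length := List.IsPrefix.length_le ⟨y, hT⟩
  rw [List.length_append] at hle
  exact ⟨x.length + 1, x.length + (Substr T i j).length, by omega, by omega, hle,
    substr_eq_of_append_eq hT, s, hs, hxs, hsw⟩

theorem IsSuffixient.hasCrossingOccurrence_of_rightMaximal (hS : IsSuffixient T S)
    (hv : RightMaximal T v) (hvc : v ++ [c] <:+: T) : HasCrossingOccurrence T S (v ++ [c]) := by
  obtain ⟨s, hs, x, hx⟩ := hS.2 v c hv hvc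
  have hlen : x.length + (v ++ [c]).length = s := by
    rw [← List.length_append, hx, List.length_take_of_le (hS.1 s hs).2]
  refine ⟨x, T.drop s, by rw [hx, List.take_append_drop], s, hs, ?_, hlen.ge⟩
  rw [List.length_append, List.length_singleton] at hlen
  omega

theorem HasCrossingOccurrence.append_singleton (hcross : HasCrossingOccurrence T S v)
    (hsuffix : ¬ v <:+ T) (hv : ¬ RightMaximal T v) (hvc : v ++ [c] <:+: T) :
    HasCrossingOccurrence T S (v ++ [c]) := by
  obtain ⟨x, y, hT, s, hs, hxs, hsv⟩ := hcross
  cases y with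
  | nil => exact absurd ⟨x, by rwa [List.append_nil] at hT⟩ hsuffix
  | cons d y =>
    have hT' : x ++ (v ++ [d]) ++ y = T := by
      simpa only [List.append_assoc, List.singleton_append] using hT
    have hdc : d = c := by
      by_contra hne
      exact hv ⟨d, c, hne, ⟨x, y, hT'⟩, hvc⟩
    subst hdc
    refine ⟨x, y, hT', s, hs, hxs, ?_⟩
    rw [List.length_append]
    omega

theorem IsSuffixient.hasCrossingOccurrence (hS : IsSuffixient T S)
    (hsuffix : ∀ v c, v <:+ T → v ++ [c] <:+: T → RightMaximal T v)
    (hw : w ≠ []) (hwT : w <:+: T) : HasCrossingOccurrence T S w := by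
  induction w using List.reverseRecOn with
  | nil => exact absurd rfl hw
  | append_singleton v c ih =>
    by_cases hv : RightMaximal T v
    · exact hS.hasCrossingOccurrence_of_rightMaximal hv hwT
    · have hv_suffix : ¬ v <:+ T := fun h => hv (hsuffix v c h hwT)
      have hv_ne : v ≠ [] := by
        rintro rfl
        exact hv_suffix List.nil_suffix
      have hvT : v <:+: T := (List.prefix_append v [c]).isInfix.trans hwT
      exact (ih hv_ne hvT).append_singleton hv_suffix hv hwT

end

/-- `hsuffix` says that appending a fresh end marker to `T` creates no new right-maximal string. -/
theorem suffixient_is_attractor_general {A : Type*} (T : List A)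
    (hsuffix : ∀ v c, v <:+ T → v ++ [c] <:+: T → RightMaximal T v)
    (S : Finset ℕ) (hS : IsSuffixient T S) :
    IsAttractor T S :=
  isAttractor_of_hasCrossingOccurrence hS.1 fun _ => hS.hasCrossingOccurrence hsuffix

/-- Every suffixient set for `T` is a string attractor for `T`. -/
theorem suffixient_is_attractor {A : Type*} [DecidableEq A] (T : List A)
    (hne : T ≠ []) (hn : 2 ≤ T.length)
    (hlast : T.count (T.getLast hne) = 1)
    (S : Finset ℕ) (hS : IsSuffixient T S) :
    IsAttractor T S := by
  obtain ⟨u, e, hu, he, rfl⟩ := exists_eq_append_singleton_of_count_getLast_eq_one hne hn hlast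
  exact suffixient_is_attractor_general _
    (fun _ _ => rightMaximal_of_suffix_of_append_singleton_infix hu he) S hS
end

section
/- Let T be a string of length n ≥ 2 over an alphabet Σ whose last character occurs exactly once in T. Let γ be the minimum cardinality of a string attractor for T and χ be the minimum cardinality of a suffixient set for T (both minima exist, since {1,…,n} is both a string attractor and a suffixient set for T). Then γ ≤ χ. -/
/-!
Every suffixient set is already a string attractor. Let `w` be a nonempty string occurring in `T`,
and let `v` be its longest proper prefix that is right-maximal, which exists because the empty
string is right-maximal; write `w = v·c·u`. Suffixience puts an occurrence of `v·c` across a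
position of `S`. No proper prefix of `w` from `v·c` on is right-maximal, so every occurrence of one
continues as in `w` unless it ends at the end of `T`. The exception would be a suffix of `T` that
also occurs followed by a character but is not right-maximal; when the last character is unique,
only the empty suffix also occurs followed by a character. Hence the occurrence of `v·c` grows to
one of `w` across the same position.
-/

section

variable {A : Type*}

theorem substr_isInfix (T : List A) (i j : ℕ) : Substr T i j <:+: T :=
  (List.drop_suffix _ _).isInfix.trans (List.take_prefix _ _).isInfix

theorem length_substr {T : List A} {j : ℕ} (i : ℕ) (hj : j ≤ T.length) :
    (Substr T i j).length = j - (i - 1) := by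
  rw [Substr, List.length_drop, List.length_take_of_le hj]

theorem substr_append_append (p w q : List A) :
    Substr (p ++ w ++ q) (p.length + 1) (p.length + w.length) = w := by
  rw [Substr, ← List.length_append, List.take_left, Nat.add_sub_cancel, List.drop_left]

/-- Some occurrence of `w` in `T` contains the 1-based position `s`. This is the condition an
attractor position has to meet, with the occurrence given by a factorization of `T` instead of by
its endpoints. -/
def OccursAcross (T w : List A) (s : ℕ) : Prop :=
  ∃ p q, p ++ w ++ q = T ∧ p.length < s ∧ s ≤ p.length + w.length

theorem isAttractor_of_forall_occursAcross {T : List A} {Γ : Finset ℕ}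
    (hΓ : ∀ s ∈ Γ, 1 ≤ s ∧ s ≤ T.length)
    (h : ∀ w ≠ [], w <:+: T → ∃ s ∈ Γ, OccursAcross T w s) : IsAttractor T Γ := by
  refine ⟨hΓ, fun i j hi hij hj => ?_⟩
  have hw : Substr T i j ≠ [] := by
    rw [← List.length_pos_iff, length_substr i hj]
    omega
  obtain ⟨s, hs, p, q, hT, hps, hsw⟩ := h _ hw (substr_isInfix T i j)
  have hlen := congrArg List.length hT
  simp only [List.length_append] at hlen
  refine ⟨p.length + 1, p.length + (Substr T i j).length, by omega, by omega, by omega, ?_,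
    s, hs, hps, hsw⟩
  generalize Substr T i j = w at hT ⊢
  rw [← hT, substr_append_append]

theorem occursAcross_of_suffix_take {T w : List A} {s : ℕ} (hw : w ≠ []) (hs : s ≤ T.length)
    (h : w <:+ T.take s) : OccursAcross T w s := by
  obtain ⟨p, hp⟩ := h
  have hlen : p.length + w.length = s := by
    rw [← List.length_append, hp, List.length_take_of_le hs]
  have hpos : 0 < w.length := List.length_pos_iff.2 hw
  exact ⟨p, T.drop s, by rw [hp, List.take_append_drop], by omega, hlen.ge⟩

theorem OccursAcross.append_singleton {T v : List A} {c : A} {s : ℕ} (h : OccursAcross T v s)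
    (hvc : v ++ [c] <:+: T) (hmax : ¬ RightMaximal T v) (hsuff : ¬ v <:+ T) :
    OccursAcross T (v ++ [c]) s := by
  obtain ⟨p, _ | ⟨d, q⟩, hT, hps, hsv⟩ := h
  · exact absurd ⟨p, by rw [← hT, List.append_nil]⟩ hsuff
  · have hT' : p ++ (v ++ [d]) ++ q = T := by
      rw [← hT]
      simp only [List.append_assoc, List.singleton_append]
    have hdc : d = c := by
      by_contra hne
      exact hmax ⟨d, c, hne, ⟨p, q, hT'⟩, hvc⟩
    subst hdc
    exact ⟨p, q, hT', hps, by rw [List.length_append]; omega⟩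

theorem IsSuffixient.exists_occursAcross {T : List A} {S : Finset ℕ} (hS : IsSuffixient T S)
    (hT : ∀ v c, v <:+ T → v ++ [c] <:+: T → RightMaximal T v) {w : List A} (hw : w ≠ [])
    (hwT : w <:+: T) : ∃ s ∈ S, OccursAcross T w s := by
  induction w using List.reverseRecOn with
  | nil => exact absurd rfl hw
  | append_singleton v c ih =>
    by_cases hmax : RightMaximal T v
    · obtain ⟨s, hs, hsuff⟩ := hS.2 v c hmax hwT
      exact ⟨s, hs, occursAcross_of_suffix_take hw (hS.1 s hs).2 hsuff⟩
    · have hsuff : ¬ v <:+ T := fun h => hmax (hT v c h hwT)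
      have hv : v ≠ [] := fun h => hsuff (h ▸ List.nil_suffix)
      obtain ⟨s, hs, hacross⟩ := ih hv ((List.prefix_append v [c]).isInfix.trans hwT)
      exact ⟨s, hs, hacross.append_singleton hwT hmax hsuff⟩

theorem IsSuffixient.isAttractor {T : List A} {S : Finset ℕ} (hS : IsSuffixient T S)
    (hT : ∀ v c, v <:+ T → v ++ [c] <:+: T → RightMaximal T v) : IsAttractor T S :=
  isAttractor_of_forall_occursAcross hS.1 fun _ hw hwT => hS.exists_occursAcross hT hw hwT

theorem isSuffixient_Icc (T : List A) : IsSuffixient T (Finset.Icc 1 T.length) := by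
  refine ⟨fun s hs => Finset.mem_Icc.1 hs, ?_⟩
  rintro w c - ⟨p, q, rfl⟩
  refine ⟨(p ++ (w ++ [c])).length, ?_, ?_⟩
  · simp only [Finset.mem_Icc, List.length_append, List.length_singleton]
    omega
  · rw [List.take_left]
    exact List.suffix_append _ _

theorem rightMaximal_nil_of_mem {T : List A} {a b : A} (ha : a ∈ T) (hb : b ∈ T) (hab : a ≠ b) :
    RightMaximal T [] :=
  ⟨a, b, hab, (List.singleton_infix_iff a T).2 ha, (List.singleton_infix_iff b T).2 hb⟩

theorem infix_of_concat_infix_concat {v l : List A} {a c : A}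
    (h : v ++ [c] <:+: l ++ [a]) : v <:+: l := by
  rcases List.infix_concat_iff.1 h with hsuff | hinfix
  · rcases List.suffix_concat_iff.1 hsuff with hnil | ⟨t, ht, htl⟩
    · exact absurd hnil (by simp)
    · rw [(List.append_inj' ht rfl).1]
      exact htl.isInfix
  · exact (List.prefix_append v [c]).isInfix.trans hinfix

theorem rightMaximal_concat_of_suffix {l v : List A} {a c : A} (hl : l ≠ []) (ha : a ∉ l)
    (hv : v <:+ l ++ [a]) (hvc : v ++ [c] <:+: l ++ [a]) : RightMaximal (l ++ [a]) v := by
  rcases List.suffix_concat_iff.1 hv with rfl | ⟨t, rfl, -⟩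
  · obtain ⟨b, hb⟩ := List.exists_mem_of_ne_nil l hl
    exact rightMaximal_nil_of_mem (List.mem_append_left _ hb) List.mem_concat_self
      (ne_of_mem_of_not_mem hb ha)
  · exact absurd ((infix_of_concat_infix_concat hvc).subset List.mem_concat_self) ha

theorem getLast_notMem_dropLast_of_count_eq_one [DecidableEq A] {T : List A} (hne : T ≠ [])
    (h : T.count (T.getLast hne) = 1) : T.getLast hne ∉ T.dropLast := by
  have hcount := congrArg (List.count (T.getLast hne)) (List.dropLast_concat_getLast hne)
  rw [List.count_append, List.count_singleton_self, h] at hcount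
  exact List.count_eq_zero.1 (by omega)

theorem rightMaximal_of_suffix_of_count_getLast_eq_one [DecidableEq A] {T : List A} (hne : T ≠ [])
    (hn : 2 ≤ T.length) (hlast : T.count (T.getLast hne) = 1) {v : List A} {c : A}
    (hv : v <:+ T) (hvc : v ++ [c] <:+: T) : RightMaximal T v := by
  have hdrop : T.dropLast ≠ [] := by
    rw [← List.length_pos_iff, List.length_dropLast]
    omega
  have hmem := getLast_notMem_dropLast_of_count_eq_one hne hlast
  have hT := List.dropLast_concat_getLast hne
  rw [← hT] at hv hvc
  exact hT ▸ rightMaximal_concat_of_suffix hdrop hmem hv hvc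

theorem gamma_le_chi_general (T : List A)
    (hT : ∀ v c, v <:+ T → v ++ [c] <:+: T → RightMaximal T v) :
    {k : ℕ | ∃ Γ : Finset ℕ, IsAttractor T Γ ∧ Γ.card = k}.Nonempty ∧
    {k : ℕ | ∃ S : Finset ℕ, IsSuffixient T S ∧ S.card = k}.Nonempty ∧
    sInf {k : ℕ | ∃ Γ : Finset ℕ, IsAttractor T Γ ∧ Γ.card = k} ≤
      sInf {k : ℕ | ∃ S : Finset ℕ, IsSuffixient T S ∧ S.card = k} := by
  have hsub : {k : ℕ | ∃ S : Finset ℕ, IsSuffixient T S ∧ S.card = k} ⊆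
      {k : ℕ | ∃ Γ : Finset ℕ, IsAttractor T Γ ∧ Γ.card = k} :=
    fun _ ⟨S, hS, hcard⟩ => ⟨S, hS.isAttractor hT, hcard⟩
  have hχ : {k : ℕ | ∃ S : Finset ℕ, IsSuffixient T S ∧ S.card = k}.Nonempty :=
    ⟨_, _, isSuffixient_Icc T, rfl⟩
  exact ⟨hχ.mono hsub, hχ, csInf_le_csInf (OrderBot.bddBelow _) hχ hsub⟩

end

/-- The minimum cardinality `γ` of a string attractor for `T` is at most the minimum
cardinality `χ` of a suffixient set for `T` (both minima exist, since `{1,…,n}` is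
both a string attractor and a suffixient set for `T`). -/
theorem gamma_le_chi {A : Type*} [DecidableEq A] (T : List A)
    (hne : T ≠ []) (hn : 2 ≤ T.length)
    (hlast : T.count (T.getLast hne) = 1) :
    {k : ℕ | ∃ Γ : Finset ℕ, IsAttractor T Γ ∧ Γ.card = k}.Nonempty ∧
    {k : ℕ | ∃ S : Finset ℕ, IsSuffixient T S ∧ S.card = k}.Nonempty ∧
    sInf {k : ℕ | ∃ Γ : Finset ℕ, IsAttractor T Γ ∧ Γ.card = k} ≤
      sInf {k : ℕ | ∃ S : Finset ℕ, IsSuffixient T S ∧ S.card = k} := by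
  exact gamma_le_chi_general T fun _ _ =>
    rightMaximal_of_suffix_of_count_getLast_eq_one hne hn hlast
end

section
/- Let T be a string of length n ≥ 2 over a linearly ordered alphabet Σ whose last character occurs exactly once in T, and let B = BWT(reverse(T)) with r̄ runs. Then the set S = { pos(j) : 1 ≤ j ≤ n and j is the first or the last position of some run of B } is a suffixient set for T, and |S| ≤ 2·r̄. -/
/-- The rotation start offsets `0, …, n−1` of `W`, sorted so that the corresponding
cyclic rotations of `W` are in (non-decreasing, hence for distinct rotations increasing)
lexicographic order.  The `j`-th (1-based) lexicographically smallest rotation of `W`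
is `W.rotate ((sortedRotIdx W).getD (j-1) 0)`. -/
def sortedRotIdx {A : Type*} [LinearOrder A] (W : List A) : List ℕ :=
  List.insertionSort (fun a b => W.rotate a ≤ W.rotate b) (List.range W.length)

/-- The Burrows–Wheeler transform of `W`: the `j`-th entry is the last character of the
`j`-th lexicographically smallest cyclic rotation of `W` (as an `Option`, which is
always `some` when `W` is nonempty). -/
def BWT {A : Type*} [LinearOrder A] (W : List A) : List (Option A) :=
  (sortedRotIdx W).map (fun k => (W.rotate k).getLast?)

/-- The number of runs (maximal blocks of consecutive equal characters) of a string. -/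
def runsCount {B : Type*} [DecidableEq B] (L : List B) : ℕ :=
  (L.destutter (· ≠ ·)).length

/-- `j` (1-based) is the first or the last position of some run of `L`. -/
def IsRunBoundary {B : Type*} (L : List B) (j : ℕ) : Prop :=
  1 ≤ j ∧ j ≤ L.length ∧
    (j = 1 ∨ L[j-2]? ≠ L[j-1]? ∨ j = L.length ∨ L[j-1]? ≠ L[j]?)

instance {B : Type*} [DecidableEq B] (L : List B) : DecidablePred (IsRunBoundary L) :=
  fun j => by unfold IsRunBoundary; infer_instance

/-- If the `j`-th (1-based) lexicographically smallest rotation of `W = reverse T`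
starts at (1-based) index `i` of `W`, then `pos(j) = 1` if `i = 1` and
`pos(j) = n − i + 2` otherwise; with this definition `T[pos(j)]` is the `j`-th
character of `BWT W`. -/
def posOf {A : Type*} [LinearOrder A] (W : List A) (j : ℕ) : ℕ :=
  if (sortedRotIdx W).getD (j-1) 0 = 0 then 1
  else W.length - (sortedRotIdx W).getD (j-1) 0 + 1

/-!
Let `W` be the reverse of `T`. An occurrence of `w·c` in `T` is an occurrence of `c·wᴿ` in `W`,
hence a rotation of `W` that starts with `wᴿ` and ends with `c`. The rotations with prefix `wᴿ` are
consecutive in lexicographic order, and if `w` is right-maximal their last characters are not all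
equal; so one of them that ends with `c` lies at a boundary of a run of `BWT W`. The unique last
character of `T` does not occur in `w`, so the prefix `wᴿ` of that rotation does not wrap around
the end of `W`, and the rotation comes from an occurrence of `w·c` in `T` that ends at the recorded
position.
-/

section Lists

variable {A : Type*}

theorem ordConnected_setOf_prefix [LinearOrder A] (u : List A) :
    Set.OrdConnected {l : List A | u <+: l} := by
  refine ⟨?_⟩
  induction u with
  | nil => exact fun _ _ _ _ _ _ => List.nil_prefix
  | cons a u ih =>
    rintro _ ⟨x, rfl⟩ _ ⟨z, rfl⟩ (_ | ⟨b, y⟩) ⟨hxy, hyz⟩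
    · exact absurd hxy (List.nil_lt_cons _ _).not_ge
    · simp only [List.cons_append, le_iff_lt_or_eq, List.cons_lt_cons_iff, List.cons.injEq]
        at hxy hyz
      have hab : a = b := by grind
      subst hab
      simp only [lt_irrefl, true_and, false_or, ← le_iff_lt_or_eq] at hxy hyz
      exact List.cons_prefix_cons.2
        ⟨rfl, ih (List.prefix_append u x) (List.prefix_append u z) ⟨hxy, hyz⟩⟩

theorem prefix_left_of_prefix_append_cons {u l₁ l₂ : List A} {d : A} (hd : d ∉ u)
    (h : u <+: l₁ ++ d :: l₂) : u <+: l₁ := by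
  rcases List.prefix_or_prefix_of_prefix h (List.prefix_append l₁ _) with h₁ | ⟨v, rfl⟩
  · exact h₁
  · rw [List.prefix_append_right_inj] at h
    rcases v with _ | ⟨a, v⟩
    · rw [List.append_nil]
    · obtain rfl : a = d := (List.cons_prefix_cons.1 h).1
      simp at hd

theorem rotate_succ_eq_drop_append_take_concat {l : List A} {m : ℕ} (h : m < l.length) :
    l.rotate (m + 1) = l.drop (m + 1) ++ (l.take m ++ [l[m]]) := by
  rw [List.rotate_eq_drop_append_take h, List.take_append_getElem]

theorem infix_dropLast_of_concat_infix {w l : List A} {c : A} (h : w ++ [c] <:+: l) :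
    w <:+: l.dropLast := by
  obtain ⟨s, t, rfl⟩ := h
  refine ⟨s, (c :: t).dropLast, ?_⟩
  rw [← List.dropLast_append_of_ne_nil (List.cons_ne_nil c t)]
  simp

theorem getLast_notMem_dropLast [DecidableEq A] {l : List A} (hne : l ≠ [])
    (h : l.count (l.getLast hne) = 1) : l.getLast hne ∉ l.dropLast := by
  rw [← List.count_eq_zero]
  have := List.count_append (a := l.getLast hne) (l₁ := l.dropLast) (l₂ := [l.getLast hne])
  rw [List.dropLast_append_getLast, h, List.count_singleton_self] at this
  omega

theorem exists_rotate_of_cons_infix {W u : List A} {c : A} (h : c :: u <:+: W) :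
    ∃ k, u <+: W.rotate k ∧ (W.rotate k).getLast? = some c := by
  obtain ⟨s, t, rfl⟩ := h
  have hs : s.length < (s ++ c :: u ++ t).length := by simp
  refine ⟨s.length + 1, ?_⟩
  rw [rotate_succ_eq_drop_append_take_concat hs]
  simp

theorem cons_prefix_drop_of_prefix_rotate_succ {V u : List A} {c d : A} {m : ℕ} (hd : d ∉ u)
    (hm : m < (d :: V).length) (hu : u <+: (d :: V).rotate (m + 1))
    (hc : ((d :: V).rotate (m + 1)).getLast? = some c) : c :: u <+: (d :: V).drop m := by
  have hc' : (d :: V)[m] = c := by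
    rw [rotate_succ_eq_drop_append_take_concat hm, ← List.append_assoc, List.getLast?_concat] at hc
    exact Option.some.inj hc
  have hu' : u <+: V.drop m := by
    rw [List.rotate_eq_drop_append_take hm, List.drop_succ_cons, List.take_succ_cons] at hu
    exact prefix_left_of_prefix_append_cons hd hu
  rw [List.drop_eq_getElem_cons hm, hc']
  exact List.cons_prefix_cons.2 ⟨rfl, hu'⟩

theorem cons_reverse_infix_reverse {T w : List A} {c : A} (h : w ++ [c] <:+: T) :
    c :: w.reverse <:+: T.reverse := by
  simpa using List.reverse_infix.2 h

theorem RightMaximal.exists_ne {T w : List A} (hw : RightMaximal T w) (c : A) :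
    ∃ c', c' ≠ c ∧ w ++ [c'] <:+: T := by
  obtain ⟨a, b, hab, ha, hb⟩ := hw
  by_cases hac : a = c
  · exact ⟨b, hac ▸ hab.symm, hb⟩
  · exact ⟨a, hac, ha⟩

end Lists

section Runs

variable {B : Type*}

theorem exists_mem_Ico_and_not_succ {P : ℕ → Prop} {i k : ℕ} (hik : i ≤ k) (hi : P i)
    (hk : ¬P k) : ∃ j ∈ Set.Ico i k, P j ∧ ¬P (j + 1) := by
  by_contra! h
  suffices ∀ j, i ≤ j → j ≤ k → P j from hk (this k hik le_rfl)
  intro j hij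
  induction j, hij using Nat.le_induction with
  | base => exact fun _ => hi
  | succ j hij ih => exact fun hjk => h j ⟨hij, hjk⟩ (ih (by omega))

theorem exists_isRunBoundary_mem_uIcc {L : List B} {b : B} {i k : ℕ} (hi : L[i]? = some b)
    (hk : L[k]? ≠ some b) :
    ∃ j ∈ Set.uIcc i k, L[j]? = some b ∧ IsRunBoundary L (j + 1) := by
  have lt_length {j : ℕ} (hj : L[j]? = some b) : j < L.length :=
    (List.getElem?_eq_some_iff.1 hj).1
  rcases le_total i k with hik | hki
  · obtain ⟨j, hj, hjb, hjb'⟩ :=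
      exists_mem_Ico_and_not_succ (P := fun j => L[j]? = some b) hik hi hk
    refine ⟨j, Set.uIcc_of_le hik ▸ Set.Ico_subset_Icc_self hj, hjb, by omega, lt_length hjb, ?_⟩
    exact .inr <| .inr <| .inr fun h => hjb' (h ▸ hjb)
  · obtain ⟨j, hj, hjb, hjb'⟩ :=
      exists_mem_Ico_and_not_succ (P := fun j => L[j]? ≠ some b) hki hk (not_not_intro hi)
    rw [not_not] at hjb'
    refine ⟨j + 1, ?_, hjb', by omega, lt_length hjb', .inr <| .inl fun h => hjb (h ▸ hjb')⟩
    rw [Set.uIcc_of_ge hki, Set.mem_Icc]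
    exact ⟨by grind, hj.2⟩

theorem exists_isRunBoundary_map_of_prefix {A : Type*} [LinearOrder A] {L : List (List A)}
    (hL : L.SortedLE) (f : List A → B) {u r r' : List A} (hr : r ∈ L) (hr' : r' ∈ L)
    (hu : u <+: r) (hu' : u <+: r') (hf : f r' ≠ f r) :
    ∃ (j : ℕ) (hj : j < L.length), IsRunBoundary (L.map f) (j + 1) ∧ u <+: L[j] ∧
      f L[j] = f r := by
  obtain ⟨i, hi, rfl⟩ := List.mem_iff_getElem.1 hr
  obtain ⟨k, hk, rfl⟩ := List.mem_iff_getElem.1 hr'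
  obtain ⟨j, hj, hjf, hb⟩ := exists_isRunBoundary_mem_uIcc (L := L.map f) (b := f L[i])
    (i := i) (k := k) (by simp [hi]) (by simpa [hk] using hf)
  have hjL : j < L.length := by simpa using (List.getElem?_eq_some_iff.1 hjf).1
  refine ⟨j, hjL, hb, ?_, by simpa [hjL] using hjf⟩
  have hconn := (ordConnected_setOf_prefix u).preimage_mono hL.monotone_get
  have hmem : (⟨j, hjL⟩ : Fin L.length) ∈ Set.uIcc ⟨i, hi⟩ ⟨k, hk⟩ := hj
  exact hconn.uIcc_subset hu hu' hmem

variable [DecidableEq B]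

theorem runsCount_cons_cons (a b : B) (l : List B) :
    runsCount (a :: b :: l) = (if a ≠ b then 1 else 0) + runsCount (b :: l) := by
  by_cases h : a = b <;> simp [runsCount, List.destutter_cons', h, Nat.add_comm]

/-- The 0-based indices of the last positions of the runs of `L`. The last index of `L` qualifies
because `L[L.length]? = none`. -/
def runEnds (L : List B) : Finset ℕ :=
  {i ∈ Finset.range L.length | L[i]? ≠ L[i + 1]?}

theorem card_runEnds (L : List B) : (runEnds L).card = runsCount L := by
  induction L with
  | nil => rfl
  | cons a l ih =>
    rw [runEnds, Finset.card_filter] at ih ⊢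
    rw [List.length_cons, Finset.sum_range_succ']
    simp only [List.getElem?_cons_succ, List.getElem?_cons_zero, ih]
    cases l with
    | nil => simp [runsCount]
    | cons b l => simp [runsCount_cons_cons, Nat.add_comm]

/-- The second image consists of the run starts: each follows, cyclically, a run end. -/
theorem filter_isRunBoundary_subset_union_image_runEnds (L : List B) :
    (Finset.Icc 1 L.length).filter (IsRunBoundary L) ⊆
      (runEnds L).image (· + 1) ∪ (runEnds L).image (fun i => (i + 1) % L.length + 1) := by
  intro j hj
  obtain ⟨hj, -, -, h⟩ := Finset.mem_filter.1 hj
  obtain ⟨h1, hn⟩ := Finset.mem_Icc.1 hj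
  simp only [runEnds, Finset.mem_union, Finset.mem_image, Finset.mem_filter, Finset.mem_range]
  have last_mem : L[L.length - 1]? ≠ L[L.length - 1 + 1]? := by
    simp [show L.length - 1 + 1 = L.length by omega, show L ≠ [] by grind]
  obtain rfl | h1 := h1.eq_or_lt
  · exact .inr ⟨L.length - 1, ⟨by omega, last_mem⟩,
      by rw [Nat.sub_add_cancel hn, Nat.mod_self]⟩
  rcases h with rfl | h | rfl | h
  · omega
  · refine .inr ⟨j - 2, ⟨by omega, by rwa [show j - 2 + 1 = j - 1 by omega]⟩, ?_⟩
    rw [Nat.mod_eq_of_lt (by omega)]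
    omega
  · exact .inl ⟨L.length - 1, ⟨by omega, last_mem⟩, by omega⟩
  · exact .inl ⟨j - 1, ⟨by omega, by rwa [Nat.sub_add_cancel h1.le]⟩, by omega⟩

theorem card_filter_isRunBoundary_le (L : List B) :
    ((Finset.Icc 1 L.length).filter (IsRunBoundary L)).card ≤ 2 * runsCount L := by
  calc ((Finset.Icc 1 L.length).filter (IsRunBoundary L)).card
    _ ≤ ((runEnds L).image (· + 1)).card +
        ((runEnds L).image fun i => (i + 1) % L.length + 1).card :=
      (Finset.card_le_card (filter_isRunBoundary_subset_union_image_runEnds L)).trans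
        (Finset.card_union_le _ _)
    _ ≤ (runEnds L).card + (runEnds L).card :=
      add_le_add Finset.card_image_le Finset.card_image_le
    _ = 2 * runsCount L := by rw [card_runEnds, two_mul]

end Runs

section BurrowsWheeler

variable {A : Type*} [LinearOrder A]

/-- The rows of the Burrows–Wheeler matrix of `W`: its rotations in lexicographic order, so that
`BWT W` is the last column. -/
def sortedRotations (W : List A) : List (List A) :=
  (sortedRotIdx W).map W.rotate

theorem BWT_eq_map_sortedRotations (W : List A) :
    BWT W = (sortedRotations W).map List.getLast? := by
  simp [BWT, sortedRotations]

theorem mem_sortedRotIdx {W : List A} {k : ℕ} : k ∈ sortedRotIdx W ↔ k < W.length := by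
  simp [sortedRotIdx]

theorem length_sortedRotations (W : List A) : (sortedRotations W).length = W.length := by
  simp [sortedRotations, sortedRotIdx]

theorem length_BWT (W : List A) : (BWT W).length = W.length := by
  rw [BWT_eq_map_sortedRotations, List.length_map, length_sortedRotations]

theorem sortedLE_sortedRotations (W : List A) : (sortedRotations W).SortedLE := by
  let r : ℕ → ℕ → Prop := fun a b => W.rotate a ≤ W.rotate b
  have : Std.Total r := ⟨fun _ _ => le_total _ _⟩
  have : IsTrans ℕ r := ⟨fun _ _ _ => le_trans⟩
  exact ((List.pairwise_insertionSort r _).map W.rotate fun _ _ => id).sortedLE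

theorem rotate_mem_sortedRotations {W : List A} (hW : W ≠ []) (k : ℕ) :
    W.rotate k ∈ sortedRotations W := by
  rw [← List.rotate_mod]
  exact List.mem_map_of_mem
    (mem_sortedRotIdx.2 (Nat.mod_lt k (List.length_pos_iff.2 hW)))

/-- Here `m` is the 0-based index in `W` of the last character of the rotation. Counting the
rotation that starts at index `0` as the one that starts at `W.length` merges the two cases of
`posOf`. -/
theorem exists_sortedRotations_eq_rotate_succ {W : List A} {j : ℕ}
    (hj : j < (sortedRotations W).length) :
    ∃ m < W.length, (sortedRotations W)[j] = W.rotate (m + 1) ∧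
      posOf W (j + 1) = W.length - m := by
  have hj' : j < (sortedRotIdx W).length := by simpa [sortedRotations] using hj
  have hk : (sortedRotIdx W)[j] < W.length := mem_sortedRotIdx.1 (List.getElem_mem hj')
  simp only [sortedRotations, List.getElem_map, posOf, Nat.add_sub_cancel, List.getD_eq_getElem,
    hj']
  split_ifs with h0
  · refine ⟨W.length - 1, by omega, ?_, by omega⟩
    rw [h0, Nat.sub_add_cancel (by omega), List.rotate_length, List.rotate_zero]
  · exact ⟨(sortedRotIdx W)[j] - 1, by omega, by rw [Nat.sub_add_cancel (by omega)], by omega⟩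

theorem posOf_mem_Icc {W : List A} (hW : W ≠ []) (j : ℕ) : posOf W j ∈ Set.Icc 1 W.length := by
  have := List.length_pos_iff.2 hW
  grind [posOf]

theorem exists_isRunBoundary_of_cons_infix {W u : List A} {c c' : A} (hcc' : c' ≠ c)
    (hc : c :: u <:+: W) (hc' : c' :: u <:+: W) :
    ∃ j, ∃ m < W.length, IsRunBoundary (BWT W) j ∧ posOf W j = W.length - m ∧
      u <+: W.rotate (m + 1) ∧ (W.rotate (m + 1)).getLast? = some c := by
  have hW : W ≠ [] := by
    rintro rfl
    simp at hc
  obtain ⟨k, hu, hlast⟩ := exists_rotate_of_cons_infix hc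
  obtain ⟨k', hu', hlast'⟩ := exists_rotate_of_cons_infix hc'
  obtain ⟨j, hj, hb, hju, hjc⟩ := exists_isRunBoundary_map_of_prefix (sortedLE_sortedRotations W)
    List.getLast? (rotate_mem_sortedRotations hW k) (rotate_mem_sortedRotations hW k') hu hu'
    (by simpa [hlast, hlast'] using hcc')
  obtain ⟨m, hm, hrot, hpos⟩ := exists_sortedRotations_eq_rotate_succ hj
  rw [hrot] at hju hjc
  exact ⟨j + 1, m, hm, BWT_eq_map_sortedRotations W ▸ hb, hpos, hju, hjc.trans hlast⟩

theorem RightMaximal.exists_suffix_take_posOf {T w : List A} {c : A} (hw : RightMaximal T w)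
    (hne : T ≠ []) (hd : T.getLast hne ∉ w) (hc : w ++ [c] <:+: T) :
    ∃ j, IsRunBoundary (BWT T.reverse) j ∧ w ++ [c] <:+ T.take (posOf T.reverse j) := by
  obtain ⟨c', hcc', hc'⟩ := hw.exists_ne c
  obtain ⟨j, m, hm, hb, hpos, hu, hlast⟩ := exists_isRunBoundary_of_cons_infix hcc'
    (cons_reverse_infix_reverse hc) (cons_reverse_infix_reverse hc')
  have hT : T.reverse = T.getLast hne :: T.dropLast.reverse := by
    conv_lhs => rw [← List.dropLast_append_getLast hne, List.reverse_concat]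
  have hcw : c :: w.reverse <+: T.reverse.drop m := by
    rw [hT] at hm hu hlast ⊢
    exact cons_prefix_drop_of_prefix_rotate_succ (by simpa using hd) hm hu hlast
  refine ⟨j, hb, ?_⟩
  rw [hpos, List.length_reverse, ← List.reverse_prefix, ← List.drop_reverse]
  simpa using hcw

end BurrowsWheeler

/-- The set `S = { pos(j) : j is the first or the last position of some run of
`B = BWT(reverse T)` }` is a suffixient set for `T`, and `|S| ≤ 2·r̄` where `r̄` is the
number of runs of `B`. -/
theorem bwt_run_boundaries_suffixient {A : Type*} [LinearOrder A] (T : List A)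
    (hne : T ≠ []) (hn : 2 ≤ T.length)
    (hlast : T.count (T.getLast hne) = 1) :
    IsSuffixient T
      (((Finset.Icc 1 T.length).filter (IsRunBoundary (BWT T.reverse))).image
        (posOf T.reverse)) ∧
    (((Finset.Icc 1 T.length).filter (IsRunBoundary (BWT T.reverse))).image
        (posOf T.reverse)).card ≤ 2 * runsCount (BWT T.reverse) := by
  refine ⟨⟨fun s hs => ?_, fun w c hw hc => ?_⟩, ?_⟩
  · obtain ⟨j, -, rfl⟩ := Finset.mem_image.1 hs
    simpa using posOf_mem_Icc (List.reverse_ne_nil_iff.2 hne) j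
  · have hd : T.getLast hne ∉ w := fun hmem =>
      getLast_notMem_dropLast hne hlast ((infix_dropLast_of_concat_infix hc).subset hmem)
    obtain ⟨j, hj, hsuffix⟩ := hw.exists_suffix_take_posOf hne hd hc
    refine ⟨posOf T.reverse j, Finset.mem_image_of_mem _ ?_, hsuffix⟩
    have hjn : j ≤ T.length := by simpa [length_BWT] using hj.2.1
    exact Finset.mem_filter.2 ⟨Finset.mem_Icc.2 ⟨hj.1, hjn⟩, hj⟩
  · refine Finset.card_image_le.trans ?_
    simpa [length_BWT] using card_filter_isRunBoundary_le (BWT T.reverse)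
end

section
/- Let T be a string of length n ≥ 2 over an alphabet Σ whose last character occurs exactly once in T. Let c be a character occurring in T and let x be a string occurring in T such that x·c does not occur in T. Let y be the longest suffix of x such that y·c occurs in T (y exists and is a proper suffix of x, possibly empty, since the empty string satisfies the condition). Then y is right-maximal in T. -/
section

variable {A : Type*} {T w x y : List A} {c d : A}

theorem isSuffix_or_exists_append_singleton_isInfix (h : w <:+: T) :
    w <:+ T ∨ ∃ d, w ++ [d] <:+: T := by
  obtain ⟨s, t, rfl⟩ := h
  cases t with
  | nil => exact .inl ⟨s, by simp⟩
  | cons d t => exact .inr ⟨d, s, t, by simp⟩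

theorem isInfix_dropLast_of_append_singleton_isInfix (h : w ++ [c] <:+: T) :
    w <:+: T.dropLast := by
  obtain ⟨s, t, rfl⟩ := h
  exact ⟨s, (c :: t).dropLast, by simp [List.dropLast_append_of_ne_nil]⟩

theorem count_getLast_eq_one_iff [DecidableEq A] (hne : T ≠ []) :
    T.count (T.getLast hne) = 1 ↔ T.getLast hne ∉ T.dropLast := by
  have hsplit (a : A) : T.count a = T.dropLast.count a + [T.getLast hne].count a := by
    rw [← List.count_append, List.dropLast_append_getLast]
  rw [hsplit, List.count_singleton_self, Nat.add_eq_right, List.count_eq_zero]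

theorem eq_nil_of_isSuffix_of_append_singleton_isInfix (hne : T ≠ [])
    (hlast : T.getLast hne ∉ T.dropLast) (hw : w <:+ T) (hwc : w ++ [c] <:+: T) : w = [] := by
  by_contra hw_ne
  have hmem : w.getLast hw_ne ∈ T.dropLast :=
    (isInfix_dropLast_of_append_singleton_isInfix hwc).subset (List.getLast_mem hw_ne)
  rw [hw.getLast hw_ne] at hmem
  exact hlast hmem

theorem rightMaximal_nil_iff : RightMaximal T [] ↔ ∃ a ∈ T, ∃ b ∈ T, a ≠ b := by
  simp only [RightMaximal, List.nil_append, List.singleton_infix_iff]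
  tauto

theorem rightMaximal_nil_of_getLast_notMem_dropLast (hne : T ≠ []) (hn : 2 ≤ T.length)
    (hlast : T.getLast hne ∉ T.dropLast) : RightMaximal T [] := by
  have hdrop : T.dropLast ≠ [] := List.ne_nil_of_length_pos (by rw [List.length_dropLast]; omega)
  obtain ⟨a, ha⟩ := List.exists_mem_of_ne_nil _ hdrop
  exact rightMaximal_nil_iff.mpr
    ⟨a, List.mem_of_mem_dropLast ha, _, List.getLast_mem hne, ne_of_mem_of_not_mem ha hlast⟩

theorem rightMaximal_of_isSuffix_of_not_isInfix (hyx : y <:+ x)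
    (hyc : y ++ [c] <:+: T) (hxc : ¬ x ++ [c] <:+: T) (hxd : x ++ [d] <:+: T) :
    RightMaximal T y := by
  have hcd : c ≠ d := by
    rintro rfl
    exact hxc hxd
  exact ⟨c, d, hcd, hyc, (List.suffix_append_self_iff.mpr hyx).isInfix.trans hxd⟩

theorem longest_extendable_suffix_rightMaximal_general (hne : T ≠ []) (hn : 2 ≤ T.length)
    (hlast : T.getLast hne ∉ T.dropLast) (hx : x <:+: T) (hxc : ¬ x ++ [c] <:+: T)
    (hyx : y <:+ x) (hyc : y ++ [c] <:+: T) : RightMaximal T y := by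
  rcases isSuffix_or_exists_append_singleton_isInfix hx with hxT | ⟨d, hxd⟩
  · obtain rfl : y = [] :=
      eq_nil_of_isSuffix_of_append_singleton_isInfix hne hlast (hyx.trans hxT) hyc
    exact rightMaximal_nil_of_getLast_notMem_dropLast hne hn hlast
  · exact rightMaximal_of_isSuffix_of_not_isInfix hyx hyc hxc hxd

end

/-- Let `c` be a character occurring in `T` and `x` a string occurring in `T` such that
`x·c` does not occur in `T`.  If `y` is the longest suffix of `x` such that `y·c`
occurs in `T` (such a `y` exists and is a proper suffix of `x`, possibly empty, since
the empty string satisfies the condition), then `y` is right-maximal in `T`. -/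
theorem longest_extendable_suffix_rightMaximal {A : Type*} [DecidableEq A] (T : List A)
    (hne : T ≠ []) (hn : 2 ≤ T.length)
    (hlast : T.count (T.getLast hne) = 1)
    (c : A) (hc : [c] <:+: T)
    (x : List A) (hx : x <:+: T) (hxc : ¬ (x ++ [c]) <:+: T)
    (y : List A) (hyx : y <:+ x) (hyc : (y ++ [c]) <:+: T)
    (hymax : ∀ z : List A, z <:+ x → (z ++ [c]) <:+: T → z.length ≤ y.length) :
    RightMaximal T y :=
  longest_extendable_suffix_rightMaximal_general hne hn ((count_getLast_eq_one_iff hne).mp hlast)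
    hx hxc hyx hyc
end

section
/- Let T be a string of length n ≥ 2 over an alphabet Σ whose last character occurs exactly once in T, let S be a suffixient set for T, and let P[1..m] (m ≥ 1) be a pattern every character of which occurs in T. Run the MEM-finding algorithm on P, T and S. Then every time control reaches the top of the while-loop with i ≤ m, the following three invariants hold: (1) every MEM P[i′..j′] of P with respect to T with j′ ≤ i − 2 has already been reported; (2) ℓ equals the length of the longest suffix of P[1..i−1] that occurs as a substring of T; and (3) the longest suffix β of P[1..i] that occurs as a substring of T is nonempty, and the string obtained from β by removing its last character is either empty or right-maximal in T. -/
/-- `LCP(x, y)`: the length of the longest common prefix of `x` and `y`. -/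
def lcp {A : Type*} [DecidableEq A] : List A → List A → ℕ
  | a :: x, b :: y => if a = b then lcp x y + 1 else 0
  | _, _ => 0

/-- `LCS(x, y)`: the length of the longest common suffix of `x` and `y`. -/
def lcs {A : Type*} [DecidableEq A] (x y : List A) : ℕ := lcp x.reverse y.reverse

/-- The length of the longest suffix of `x` that occurs (as a substring) in `T`. -/
def maxSufLen {A : Type*} [DecidableEq A] (x T : List A) : ℕ :=
  Nat.findGreatest (fun k => x.drop (x.length - k) <:+: T) x.length

/-- The longest suffix of `x` that occurs (as a substring) in `T`. -/
def longestSufOcc {A : Type*} [DecidableEq A] (x T : List A) : List A :=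
  x.drop (x.length - maxSufLen x T)

/-- `P[i..j]` (1-based, `1 ≤ i ≤ j ≤ m`) is a maximal exact match (MEM) of `P` with
respect to `T`: it occurs in `T`, it cannot be extended to the left
(`i = 1` or `P[i−1..j]` does not occur in `T`), and it cannot be extended to the right
(`j = m` or `P[i..j+1]` does not occur in `T`). -/
def IsMEM {A : Type*} (T P : List A) (i j : ℕ) : Prop :=
  1 ≤ i ∧ i ≤ j ∧ j ≤ P.length ∧
  Substr P i j <:+: T ∧
  (i = 1 ∨ ¬ Substr P (i - 1) j <:+: T) ∧
  (j = P.length ∨ ¬ Substr P i (j + 1) <:+: T)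

/-- `Reach T P S i ℓ R` holds iff some partial run of the MEM-finding algorithm on
pattern `P`, text `T` and suffixient set `S` reaches the top of the while-loop with
current position `i`, current length `ℓ`, and list `R` of pairs reported so far
(in order, allowing any choice, at each earlier iteration, of an element `j ∈ S`
maximizing `LCS(P[1..i], T[1..s])` over `s ∈ S`). -/
inductive Reach {A : Type*} [DecidableEq A] (T P : List A) (S : Finset ℕ) :
    ℕ → ℕ → List (ℕ × ℕ) → Prop
  | init : Reach T P S 1 0 []
  | step (i ℓ : ℕ) (R : List (ℕ × ℕ)) (j : ℕ) :
      Reach T P S i ℓ R →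
      i ≤ P.length →
      j ∈ S →
      (∀ s ∈ S, lcs (P.take i) (T.take s) ≤ lcs (P.take i) (T.take j)) →
      Reach T P S
        (i + lcp (P.drop i) (T.drop j) + 1)
        (lcs (P.take i) (T.take j) + lcp (P.drop i) (T.drop j))
        (if lcs (P.take i) (T.take j) ≤ ℓ then R ++ [(i - ℓ, i - 1)] else R)

/-!
Write `β` for the longest suffix of `P[1..i]` occurring in `T`. If `β = w·c` with `w`
right-maximal, suffixiency provides a position of `S` at which `β` ends, so `b = |β|` and `β` is a
suffix of `T[1..j]` for every optimal `j`. The next `f` characters of `P` and `T` agree, hence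
`|β|` grows by one per character up to position `i + f`, which gives (2).

A MEM ending at `j'` is the longest suffix of `P[1..j']` occurring in `T`, and that length does not
grow from `j'` to `j' + 1`. So no MEM ends in `P[i..i+f-1]`, and one ending at `i - 1` forces
`b ≤ ℓ`, in which case exactly that MEM is reported; this gives (1).

Finally, the new `β` has the form `w·c`, where `w` is a suffix of `T[1..j+f]` and `c` differs from
`T[j+f+1]` if the latter exists. In that case `w` is right-maximal; otherwise `w` is a suffix
of `T` which, when nonempty, would repeat the unique last character of `T`. This gives (3).
-/

section CommonPrefix

variable {A : Type*} [DecidableEq A]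

theorem le_lcp_iff {k : ℕ} {x y : List A} :
    k ≤ lcp x y ↔ ∃ z, z.length = k ∧ z <+: x ∧ z <+: y := by
  constructor
  · fun_induction lcp x y generalizing k with
    | case1 x a y ih =>
      intro hk
      rcases k with _ | k
      · exact ⟨[], rfl, List.nil_prefix, List.nil_prefix⟩
      · obtain ⟨z, hz, hzx, hzy⟩ := ih (Nat.le_of_succ_le_succ hk)
        exact ⟨a :: z, by simp [hz], (List.prefix_cons_inj a).2 hzx,
          (List.prefix_cons_inj a).2 hzy⟩
    | case2 | case3 =>
      intro hk
      exact ⟨[], (Nat.le_zero.1 hk).symm, List.nil_prefix, List.nil_prefix⟩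
  · rintro ⟨z, rfl, ⟨x, rfl⟩, ⟨y, rfl⟩⟩
    induction z with
    | nil => exact Nat.zero_le _
    | cons a z ih => simpa [lcp] using ih

theorem lcp_le_length_left (x y : List A) : lcp x y ≤ x.length := by
  obtain ⟨z, hz, hzx, -⟩ := le_lcp_iff.1 (le_refl (lcp x y))
  exact hz ▸ hzx.length_le

theorem take_eq_take_of_le_lcp {k : ℕ} {x y : List A} (hk : k ≤ lcp x y) :
    x.take k = y.take k := by
  obtain ⟨z, rfl, hzx, hzy⟩ := le_lcp_iff.1 hk
  rw [← List.prefix_iff_eq_take.1 hzx, ← List.prefix_iff_eq_take.1 hzy]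

theorem getElem?_lcp_ne {x y : List A} {c : A} (hx : x[lcp x y]? = some c) :
    y[lcp x y]? ≠ some c := by
  intro hy
  have htake : x.take (lcp x y + 1) = y.take (lcp x y + 1) := by
    rw [List.take_add_one, List.take_add_one, hx, hy, take_eq_take_of_le_lcp le_rfl]
  obtain ⟨hlt, -⟩ := List.getElem?_eq_some_iff.1 hx
  exact Nat.not_succ_le_self _ <| le_lcp_iff.2
    ⟨x.take (lcp x y + 1), List.length_take_of_le hlt, List.take_prefix _ _,
      htake ▸ List.take_prefix _ _⟩

theorem le_lcs_iff {k : ℕ} {x y : List A} :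
    k ≤ lcs x y ↔ ∃ z, z.length = k ∧ z <:+ x ∧ z <:+ y := by
  rw [lcs, le_lcp_iff]
  constructor
  · rintro ⟨z, hz, hzx, hzy⟩
    exact ⟨z.reverse, by simpa using hz, List.reverse_prefix.1 (by simpa using hzx),
      List.reverse_prefix.1 (by simpa using hzy)⟩
  · rintro ⟨z, hz, hzx, hzy⟩
    exact ⟨z.reverse, by simpa using hz, List.reverse_prefix.2 hzx, List.reverse_prefix.2 hzy⟩

end CommonPrefix

section LongestSuffix

variable {A : Type*} [DecidableEq A] {T w x y : List A}

theorem longestSufOcc_isSuffix : longestSufOcc x T <:+ x :=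
  List.drop_suffix _ _

theorem longestSufOcc_isInfix : longestSufOcc x T <:+: T :=
  Nat.findGreatest_spec (P := fun k => x.drop (x.length - k) <:+: T) (Nat.zero_le x.length)
    (by simp)

theorem length_longestSufOcc : (longestSufOcc x T).length = maxSufLen x T := by
  have hle : maxSufLen x T ≤ x.length := Nat.findGreatest_le _
  rw [longestSufOcc, List.length_drop]
  omega

theorem infix_iff_length_le_maxSufLen (hw : w <:+ x) :
    w <:+: T ↔ w.length ≤ maxSufLen x T := by
  constructor
  · intro hwT
    exact Nat.le_findGreatest hw.length_le (List.suffix_iff_eq_drop.1 hw ▸ hwT)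
  · intro hle
    rw [← length_longestSufOcc] at hle
    exact (List.suffix_of_suffix_length_le hw longestSufOcc_isSuffix hle).isInfix.trans
      longestSufOcc_isInfix

theorem suffix_longestSufOcc (hw : w <:+ x) (hwT : w <:+: T) : w <:+ longestSufOcc x T := by
  refine List.suffix_of_suffix_length_le hw longestSufOcc_isSuffix ?_
  rw [length_longestSufOcc]
  exact (infix_iff_length_le_maxSufLen hw).1 hwT

theorem longestSufOcc_append (h : longestSufOcc x T ++ y <:+: T) :
    longestSufOcc (x ++ y) T = longestSufOcc x T ++ y := by
  obtain ⟨v, hv⟩ :=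
    suffix_longestSufOcc (List.suffix_append_self_iff.2 longestSufOcc_isSuffix) h
  rw [← List.append_assoc] at hv
  have hvx : v ++ longestSufOcc x T <:+ x := by
    rw [← List.suffix_append_self_iff (l₃ := y), hv]
    exact longestSufOcc_isSuffix
  have hvT : v ++ longestSufOcc x T <:+: T :=
    (List.infix_append' [] _ y).trans (by simpa [hv] using longestSufOcc_isInfix)
  have hlen := (suffix_longestSufOcc hvx hvT).length_le
  have hv_nil : v = [] := List.length_eq_zero_iff.1 (by rw [List.length_append] at hlen; omega)
  rw [← hv, hv_nil, List.nil_append]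

theorem exists_suffix_longestSufOcc_concat {c : A} (hc : [c] <:+: T) :
    ∃ w, w <:+ longestSufOcc x T ∧ longestSufOcc (x ++ [c]) T = w ++ [c] := by
  rcases List.suffix_concat_iff.1 (longestSufOcc_isSuffix (x := x ++ [c]) (T := T)) with
    hnil | ⟨w, hw, hwx⟩
  · have := (suffix_longestSufOcc (List.suffix_append x [c]) hc).length_le
    simp [hnil] at this
  · refine ⟨w, suffix_longestSufOcc hwx ?_, hw⟩
    exact (List.prefix_append w [c]).isInfix.trans (hw ▸ longestSufOcc_isInfix)

theorem lcs_eq_maxSufLen (hx : longestSufOcc x T <:+ y) (hy : y <:+: T) :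
    lcs x y = maxSufLen x T := by
  apply le_antisymm
  · obtain ⟨z, hz, hzx, hzy⟩ := le_lcs_iff.1 (le_refl (lcs x y))
    exact hz ▸ (infix_iff_length_le_maxSufLen hzx).1 (hzy.isInfix.trans hy)
  · exact le_lcs_iff.2 ⟨_, length_longestSufOcc, longestSufOcc_isSuffix, hx⟩

theorem IsSuffixient.longestSufOcc_suffix_take {S : Finset ℕ} {c : A} {j : ℕ}
    (hS : IsSuffixient T S) (hx : longestSufOcc x T = w ++ [c]) (hw : RightMaximal T w)
    (hj : ∀ s ∈ S, lcs x (T.take s) ≤ lcs x (T.take j)) :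
    longestSufOcc x T <:+ T.take j := by
  obtain ⟨s, hs, hsuf⟩ := hS.2 w c hw (hx ▸ longestSufOcc_isInfix)
  have hle : (longestSufOcc x T).length ≤ lcs x (T.take s) :=
    le_lcs_iff.2 ⟨_, rfl, longestSufOcc_isSuffix, hx ▸ hsuf⟩
  obtain ⟨z, hz, hzx, hzT⟩ := le_lcs_iff.1 (hle.trans (hj s hs))
  exact (List.suffix_of_suffix_length_le longestSufOcc_isSuffix hzx hz.ge).trans hzT

theorem longestSufOcc_take_add {P : List A} {i j k : ℕ}
    (hβ : longestSufOcc (P.take i) T <:+ T.take j) (hk : k ≤ lcp (P.drop i) (T.drop j)) :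
    longestSufOcc (P.take (i + k)) T = longestSufOcc (P.take i) T ++ (P.drop i).take k ∧
      longestSufOcc (P.take (i + k)) T <:+ T.take (j + k) := by
  have hsuf : longestSufOcc (P.take i) T ++ (P.drop i).take k <:+ T.take (j + k) := by
    rw [take_eq_take_of_le_lcp hk, List.take_add]
    exact List.suffix_append_self_iff.2 hβ
  have heq := longestSufOcc_append (hsuf.isInfix.trans (List.take_prefix _ _).isInfix)
  rw [List.take_add, heq]
  exact ⟨rfl, hsuf.trans (by rw [List.take_add])⟩

theorem maxSufLen_take_add {P : List A} {i j k : ℕ}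
    (hβ : longestSufOcc (P.take i) T <:+ T.take j) (hk : k ≤ lcp (P.drop i) (T.drop j)) :
    maxSufLen (P.take (i + k)) T = maxSufLen (P.take i) T + k := by
  rw [← length_longestSufOcc, (longestSufOcc_take_add hβ hk).1, List.length_append,
    length_longestSufOcc, List.length_take_of_le (hk.trans (lcp_le_length_left _ _))]

end LongestSuffix

section RightMaximalSuffixes

variable {A : Type*}

/-- Every suffix of `T` that also occurs in `T` followed by some character is right-maximal in `T`.
This is what the unique last character of `T` provides: a mismatch of a match with `T` either
shows two different continuations, or happens at the end of `T`. -/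
def RightMaximalSuffixes (T : List A) : Prop :=
  ∀ (w : List A) (c : A), w <:+ T → (w ++ [c]) <:+: T → RightMaximal T w

theorem RightMaximalSuffixes.concat {t : List A} {a : A} (ht : t ≠ []) (ha : a ∉ t) :
    RightMaximalSuffixes (t ++ [a]) := by
  intro w c hw hwc
  rcases List.suffix_concat_iff.1 hw with rfl | ⟨v, rfl, -⟩
  · have hmem : t.head ht ∈ t := List.head_mem ht
    exact ⟨t.head ht, a, fun h => ha (h ▸ hmem),
      (List.singleton_infix_iff _ _).2 (List.mem_append_left _ hmem),
      (List.singleton_infix_iff _ _).2 List.mem_concat_self⟩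
  · have hv : v ++ [a] <:+: t := by
      rcases List.infix_concat_iff.1 hwc with hsuf | hinf
      · exact ((List.suffix_append_inj_of_length_eq (by simp)).1 hsuf).1.isInfix
      · exact (List.prefix_append _ _).isInfix.trans hinf
    exact absurd (hv.subset (by simp)) ha

theorem RightMaximalSuffixes.of_count_getLast [DecidableEq A] {T : List A} {hne : T ≠ []}
    (hn : 2 ≤ T.length) (hlast : T.count (T.getLast hne) = 1) : RightMaximalSuffixes T := by
  have hT : T.dropLast ++ [T.getLast hne] = T := List.dropLast_append_getLast hne
  have hcount : T.dropLast.count (T.getLast hne) = 0 := by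
    have := congrArg (List.count (T.getLast hne)) hT
    rw [List.count_append, List.count_singleton_self, hlast] at this
    omega
  rw [← hT]
  refine .concat (List.ne_nil_of_length_pos ?_) (List.count_eq_zero.1 hcount)
  rw [List.length_dropLast]
  omega

theorem RightMaximalSuffixes.rightMaximal_of_getElem?_ne {T w : List A} {k : ℕ} {c : A}
    (hT : RightMaximalSuffixes T) (hw : w <:+ T.take k) (hwc : w ++ [c] <:+: T)
    (hk : T[k]? ≠ some c) : RightMaximal T w := by
  rcases Nat.lt_or_ge k T.length with hlt | hge
  · have hwk : w ++ [T[k]] <:+: T := by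
      have := List.suffix_append_self_iff (l₃ := [T[k]]).2 hw
      rw [List.take_append_getElem] at this
      exact this.isInfix.trans (List.take_prefix _ _).isInfix
    exact ⟨c, T[k], fun h => hk (h ▸ List.getElem?_eq_getElem hlt), hwc, hwk⟩
  · exact hT w c (List.take_of_length_le hge ▸ hw) hwc

end RightMaximalSuffixes

section MaximalExactMatch

variable {A : Type*} {T P : List A} {i j : ℕ}

theorem substr_suffix_take : Substr P i j <:+ P.take j :=
  List.drop_suffix _ _

theorem length_substr_s8 (hi : 1 ≤ i) (hj : j ≤ P.length) : (Substr P i j).length = j + 1 - i := by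
  rw [Substr, List.length_drop, List.length_take_of_le hj]
  omega

variable [DecidableEq A]

theorem substr_infix_iff (hi : 1 ≤ i) (hj : j ≤ P.length) :
    Substr P i j <:+: T ↔ j + 1 - i ≤ maxSufLen (P.take j) T := by
  rw [infix_iff_length_le_maxSufLen substr_suffix_take, length_substr_s8 hi hj]

theorem IsMEM.maxSufLen_take (h : IsMEM T P i j) : maxSufLen (P.take j) T = j + 1 - i := by
  obtain ⟨hi, hij, hj, hocc, hleft, -⟩ := h
  refine le_antisymm ?_ ((substr_infix_iff hi hj).1 hocc)
  have hle : maxSufLen (P.take j) T ≤ j :=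
    (Nat.findGreatest_le _).trans (List.length_take_le _ _)
  by_contra! hlt
  have hi_ne : i ≠ 1 := by omega
  exact hleft.resolve_left hi_ne ((substr_infix_iff (by omega) hj).2 (by omega))

theorem IsMEM.maxSufLen_take_succ_le (h : IsMEM T P i j) (hjP : j < P.length) :
    maxSufLen (P.take (j + 1)) T ≤ maxSufLen (P.take j) T := by
  have hlen := h.maxSufLen_take
  obtain ⟨hi, hij, -, -, -, hright⟩ := h
  by_contra! hlt
  exact hright.resolve_left hjP.ne ((substr_infix_iff (j := j + 1) hi hjP).2 (by omega))

end MaximalExactMatch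

section LoopInvariant

variable {A : Type*} [DecidableEq A] {T P : List A} {S : Finset ℕ} {i ℓ j : ℕ} {R : List (ℕ × ℕ)}

/-- The state `(i, ℓ, R)` of the MEM-finding algorithm satisfies the loop invariants. The third
one, which is void at loop exit `i = m + 1`, is stated for a right-maximal `w` without the
alternative `w = ε`, as this is the form in which suffixiency applies to it. -/
structure LoopInvariant (T P : List A) (i ℓ : ℕ) (R : List (ℕ × ℕ)) : Prop where
  mem_of_isMEM : ∀ i' j', IsMEM T P i' j' → j' + 2 ≤ i → (i', j') ∈ R
  eq_maxSufLen : ℓ = maxSufLen (P.take (i - 1)) T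
  exists_rightMaximal : i ≤ P.length →
    ∃ w c, longestSufOcc (P.take i) T = w ++ [c] ∧ RightMaximal T w

theorem LoopInvariant.init (hT : RightMaximalSuffixes T) (hP : ∀ c ∈ P, [c] <:+: T) :
    LoopInvariant T P 1 0 [] where
  mem_of_isMEM i' j' h hle := by
    have := h.1.trans h.2.1
    omega
  eq_maxSufLen := by simp [maxSufLen]
  exists_rightMaximal hlen := by
    have hc : [P[0]] <:+: T := hP _ (List.getElem_mem hlen)
    obtain ⟨w, hw, heq⟩ := exists_suffix_longestSufOcc_concat (x := []) hc
    obtain rfl : w = [] := List.suffix_nil.1 (hw.trans longestSufOcc_isSuffix)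
    refine ⟨[], P[0], ?_, hT [] P[0] List.nil_suffix hc⟩
    rw [← heq, ← List.take_append_getElem hlen, List.take_zero]

theorem LoopInvariant.mem_of_isMEM_step {i' j' : ℕ} (h : LoopInvariant T P i ℓ R)
    (hi : i ≤ P.length) (hβ : longestSufOcc (P.take i) T <:+ T.take j)
    (hmem : IsMEM T P i' j') (hj' : j' + 2 ≤ i + lcp (P.drop i) (T.drop j) + 1) :
    (i', j') ∈ if maxSufLen (P.take i) T ≤ ℓ then R ++ [(i - ℓ, i - 1)] else R := by
  have hf : lcp (P.drop i) (T.drop j) ≤ P.length - i := by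
    simpa using lcp_le_length_left (P.drop i) (T.drop j)
  have hgrow := hmem.maxSufLen_take_succ_le (by omega)
  rcases lt_trichotomy (j' + 1) i with hlt | rfl | hgt
  · have hR := h.mem_of_isMEM i' j' hmem hlt
    split_ifs
    exacts [List.mem_append_left _ hR, hR]
  · have hℓ : ℓ = maxSufLen (P.take j') T := h.eq_maxSufLen
    have hlen := hmem.maxSufLen_take
    have hij : i' ≤ j' := hmem.2.1
    rw [if_pos (hℓ ▸ hgrow), hℓ, hlen]
    simp only [List.mem_append, List.mem_singleton, Prod.mk.injEq]
    omega
  · obtain ⟨k, rfl⟩ : ∃ k, j' = i + k := Nat.exists_eq_add_of_le (by omega)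
    rw [add_assoc, maxSufLen_take_add hβ (by omega), maxSufLen_take_add hβ (by omega)] at hgrow
    omega

theorem exists_rightMaximal_step (hT : RightMaximalSuffixes T) (hP : ∀ c ∈ P, [c] <:+: T)
    (hβ : longestSufOcc (P.take i) T <:+ T.take j)
    (hlt : i + lcp (P.drop i) (T.drop j) < P.length) :
    ∃ w c, longestSufOcc (P.take (i + lcp (P.drop i) (T.drop j) + 1)) T = w ++ [c] ∧
      RightMaximal T w := by
  have hmis := getElem?_lcp_ne (x := P.drop i) (y := T.drop j)
    (by rw [List.getElem?_drop, List.getElem?_eq_getElem hlt])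
  have hsuf := (longestSufOcc_take_add hβ le_rfl).2
  set f := lcp (P.drop i) (T.drop j)
  obtain ⟨w, hw, heq⟩ := exists_suffix_longestSufOcc_concat (x := P.take (i + f))
    (hP _ (List.getElem_mem hlt))
  refine ⟨w, P[i + f], by rw [← List.take_append_getElem hlt, heq], ?_⟩
  rw [List.getElem?_drop] at hmis
  exact hT.rightMaximal_of_getElem?_ne (hw.trans hsuf) (heq ▸ longestSufOcc_isInfix) hmis

theorem LoopInvariant.step (hT : RightMaximalSuffixes T) (hS : IsSuffixient T S)
    (hP : ∀ c ∈ P, [c] <:+: T) (h : LoopInvariant T P i ℓ R) (hi : i ≤ P.length)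
    (hj : ∀ s ∈ S, lcs (P.take i) (T.take s) ≤ lcs (P.take i) (T.take j)) :
    LoopInvariant T P (i + lcp (P.drop i) (T.drop j) + 1)
      (lcs (P.take i) (T.take j) + lcp (P.drop i) (T.drop j))
      (if lcs (P.take i) (T.take j) ≤ ℓ then R ++ [(i - ℓ, i - 1)] else R) := by
  obtain ⟨w, c, hwc, hw⟩ := h.exists_rightMaximal hi
  have hβ := hS.longestSufOcc_suffix_take hwc hw hj
  rw [lcs_eq_maxSufLen hβ (List.take_prefix _ _).isInfix]
  exact
    { mem_of_isMEM := fun _ _ => h.mem_of_isMEM_step hi hβ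
      eq_maxSufLen := (maxSufLen_take_add hβ le_rfl).symm
      exists_rightMaximal := exists_rightMaximal_step hT hP hβ }

theorem Reach.loopInvariant (hT : RightMaximalSuffixes T) (hS : IsSuffixient T S)
    (hP : ∀ c ∈ P, [c] <:+: T) (hreach : Reach T P S i ℓ R) : LoopInvariant T P i ℓ R := by
  induction hreach with
  | init => exact .init hT hP
  | step _ _ _ _ _ hi _ hj ih => exact ih.step hT hS hP hi hj

end LoopInvariant

theorem mem_loop_invariants_general {A : Type*} [DecidableEq A] {T : List A}
    (hT : RightMaximalSuffixes T) {S : Finset ℕ} (hS : IsSuffixient T S) {P : List A}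
    (hP : ∀ c ∈ P, [c] <:+: T) {i ℓ : ℕ} {R : List (ℕ × ℕ)}
    (hreach : Reach T P S i ℓ R) (hi : i ≤ P.length) :
    (∀ i' j', IsMEM T P i' j' → j' + 2 ≤ i → (i', j') ∈ R) ∧
    ℓ = maxSufLen (P.take (i - 1)) T ∧
    (longestSufOcc (P.take i) T ≠ [] ∧
      RightMaximal T ((longestSufOcc (P.take i) T).dropLast)) := by
  have h := hreach.loopInvariant hT hS hP
  obtain ⟨w, c, hwc, hw⟩ := h.exists_rightMaximal hi
  refine ⟨h.mem_of_isMEM, h.eq_maxSufLen, by simp [hwc], ?_⟩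
  rwa [hwc, List.dropLast_concat]

/-- The loop invariants of the MEM-finding algorithm: whenever control reaches the top
of the while-loop with `i ≤ m`, (1) every MEM `P[i'..j']` with `j' ≤ i − 2` has already
been reported; (2) `ℓ` is the length of the longest suffix of `P[1..i−1]` occurring in
`T`; and (3) the longest suffix `β` of `P[1..i]` occurring in `T` is nonempty, and `β`
minus its last character is either empty or right-maximal in `T`. -/
theorem mem_loop_invariants {A : Type*} [DecidableEq A] (T : List A)
    (hne : T ≠ []) (hn : 2 ≤ T.length)
    (hlast : T.count (T.getLast hne) = 1)
    (S : Finset ℕ) (hS : IsSuffixient T S)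
    (P : List A) (hm : 1 ≤ P.length) (hP : ∀ c ∈ P, [c] <:+: T)
    (i ℓ : ℕ) (R : List (ℕ × ℕ))
    (hreach : Reach T P S i ℓ R) (hi : i ≤ P.length) :
    (∀ i' j', IsMEM T P i' j' → j' + 2 ≤ i → (i', j') ∈ R) ∧
    ℓ = maxSufLen (P.take (i - 1)) T ∧
    (longestSufOcc (P.take i) T ≠ [] ∧
      ((longestSufOcc (P.take i) T).dropLast = [] ∨
        RightMaximal T ((longestSufOcc (P.take i) T).dropLast))) := by
  have hT : RightMaximalSuffixes T := .of_count_getLast hn hlast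
  obtain ⟨hmem, hℓ, hβ, hw⟩ := mem_loop_invariants_general hT hS hP hreach hi
  exact ⟨hmem, hℓ, hβ, .inr hw⟩
end
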